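/- arXiv:2109.03168 — 2 statements merged into one kernel-verified Lean document; each statement's English description precedes it below -/
import Mathlib

section
/- The code C*_{a,r} has the following erasure recovery property: for every erasure set E ⊆ {0,…,a(r+1)−1} with |E| ≤ a and any two codewords x, y ∈ C*_{a,r} satisfying x_j = y_j for all j ∉ E, one has x_i = y_i for all i ∈ E ∩ {0,…,r−1}; i.e., the code symbols with indices in E ∩ {0,…,r−1} are uniquely determined by the unerased code symbols. -/
/-- Every square submatrix of `M` is nonsingular. -/
def AllSquareSubmatricesNonsingular {K : Type} [Field K] {r a : ℕ}
    (M : Matrix (Fin r) (Fin a) K) : Prop :=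
  ∀ (z : ℕ) (ρ : Fin z → Fin r) (σ : Fin z → Fin a),
    Function.Injective ρ → Function.Injective σ → (M.submatrix ρ σ).det ≠ 0

/-- `Γ = C ⬝ diag(α₀,…,α_{a-1})`, i.e. the `j`-th column of `C` scaled by `α j`. -/
def gammaMatrix {K : Type} [Field K] {r a : ℕ} (C : Matrix (Fin r) (Fin a) K)
    (α : Fin a → K) : Matrix (Fin r) (Fin a) K :=
  Matrix.of fun i j => C i j * α j
/-- The parity-check matrix `H = [Pᵀ | -I_a]` of the scalar code `C*_{a,r}`:
columns `0,…,ar-1` come in `a` blocks of width `r`, the `(i,j)`-th `1×r` block of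
`Pᵀ` being `Γ_{i-j}ᵀ` for `j ≤ i` and `0` otherwise; the last `a` columns form
`-I_a`. -/
def starH {K : Type} [Field K] {r a : ℕ} (Γ : Matrix (Fin r) (Fin a) K) :
    Matrix (Fin a) (Fin (a * (r + 1))) K :=
  Matrix.of fun i c =>
    if hc : (c : ℕ) < a * r then
      if hji : (c : ℕ) / r ≤ (i : ℕ) then
        Γ ⟨(c : ℕ) % r, Nat.mod_lt _ (Nat.pos_of_ne_zero fun h => by
              subst h; simp at hc)⟩
          ⟨(i : ℕ) - (c : ℕ) / r, lt_of_le_of_lt (Nat.sub_le _ _) i.isLt⟩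
      else 0
    else if (c : ℕ) - a * r = (i : ℕ) then -1 else 0

/-- The scalar code `C*_{a,r} = {x : H x = 0}`, an `[a(r+1), ar]` linear code. -/
def starCode {K : Type} [Field K] {r a : ℕ} (Γ : Matrix (Fin r) (Fin a) K) :
    Set (Fin (a * (r + 1)) → K) :=
  {x | Matrix.mulVec (starH Γ) x = 0}

/-!
By linearity it suffices that a codeword `d` with at most `a` nonzero entries vanishes on the first
`r` coordinates. A parity check whose parity symbol is zero reads `αᵢ (Cᵀ d₀)ᵢ + (W d₁)ᵢ = 0`,
where `d₀` and `d₁` collect the nonzero entries in block `0` and in the later blocks; row `i` of `W`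
only involves `α₀, …, αᵢ₋₁`, so its entries lie in `F_{Q_{i-1}}`. At most `|d₁|` rows of `W` are not
combinations of earlier rows, so at least `|d₀|` rows are; for such a row the coefficients can be
taken in `F_{Q_{i-1}}`, and eliminating `d₁` leaves `(αᵢ Cᵢ + bᵢ) ⬝ d₀ = 0` with `bᵢ` over
`F_{Q_{i-1}}`. The matrix of these equations is nonsingular: turn the rows `Cᵢ` into `αᵢ Cᵢ + bᵢ`
one by one, for increasing `i`. At each stage the determinant is `αᵢ D + D'` with `D ≠ 0` and
`D, D' ∈ F_{Q_{i-1}}`, which cannot vanish since `αᵢ ∉ F_{Q_{i-1}}`; for `i ≤ 1`, where `αᵢ = 1`,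
no elimination takes place and `bᵢ = 0`.
-/

section LinearAlgebra

open Submodule

variable {K V n : Type*} [DivisionRing K] [AddCommGroup V] [Module K V] [LinearOrder n]

theorem linearIndepOn_setOf_notMem_span_image_Iio (v : n → V) :
    LinearIndepOn K v {i | v i ∉ span K (v '' Set.Iio i)} := by
  refine linearIndepOn_of_finite _ fun t ht htfin => ?_
  lift t to Finset n using htfin
  induction t using Finset.induction_on_max with
  | empty => simp
  | insert i t hi ih =>
    rw [Finset.coe_insert, Set.insert_subset_iff] at ht
    rw [Finset.coe_insert]
    exact (ih ht.2).insert fun hmem => ht.1 (span_mono (Set.image_mono hi) hmem)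

theorem card_filter_notMem_span_image_Iio_le [Module.Finite K V] [Fintype n] (v : n → V)
    [DecidablePred fun i => v i ∉ span K (v '' Set.Iio i)] :
    (Finset.univ.filter fun i => v i ∉ span K (v '' Set.Iio i)).card ≤ Module.finrank K V := by
  rw [← Fintype.card_subtype]
  exact (linearIndepOn_setOf_notMem_span_image_Iio v).fintype_card_le_finrank

theorem mem_span_subfield_of_mem_span {K ι : Type*} [Field K] {F : Subfield K} {s : Set (ι → K)}
    (hs : ∀ x ∈ s, ∀ c, x c ∈ F) {u : ι → K} (hu : ∀ c, u c ∈ F) (hmem : u ∈ span K s) :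
    u ∈ span F s := by
  -- Apply an `F`-linear retraction `π : K → F` to the coefficients of a `K`-linear combination.
  obtain ⟨π, hπ⟩ := (Algebra.linearMap F K).exists_leftInverse_of_injective
    (LinearMap.ker_eq_bot.2 (algebraMap F K).injective)
  let proj : (ι → K) →ₗ[F] (ι → K) := (Algebra.linearMap F K ∘ₗ π).compLeft ι
  have proj_smul (k : K) {x : ι → K} (hx : ∀ c, x c ∈ F) : proj (k • x) = π k • x := by
    ext c
    have hcomm : k * x c = (⟨x c, hx c⟩ : F) • k := mul_comm _ _
    calc proj (k • x) c = (π (k * x c) : K) := rfl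
      _ = x c * π k := by rw [hcomm, map_smul]; rfl
      _ = (π k • x) c := mul_comm _ _
  have hπ_one : π 1 = 1 := LinearMap.congr_fun hπ 1
  have proj_smul_mem (x : ι → K) (hx : x ∈ span K s) : ∀ k : K, proj (k • x) ∈ span F s := by
    induction hx using span_induction with
    | mem x hx => exact fun k => proj_smul k (hs x hx) ▸ smul_mem _ _ (subset_span hx)
    | zero => simp
    | add x y _ _ ihx ihy => exact fun k => by simpa using add_mem (ihx k) (ihy k)
    | smul l x _ ih => exact fun k => by simpa only [smul_smul] using ih (k * l)
  have hproj_u : proj ((1 : K) • u) = u := by rw [proj_smul 1 hu, hπ_one, one_smul]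
  exact hproj_u ▸ proj_smul_mem u hmem 1

end LinearAlgebra

section Determinant

variable {K m n : Type*} [Field K] [Fintype m] [DecidableEq m]

theorem det_mem_subfield {F : Subfield K} {M : Matrix m m K} (hM : ∀ i j, M i j ∈ F) :
    M.det ∈ F := by
  let M' : Matrix m m F := Matrix.of fun i j => ⟨M i j, hM i j⟩
  have hdet : F.subtype M'.det = M.det := F.subtype.map_det M'
  exact hdet ▸ M'.det.2

theorem det_updateRow_smul_add_ne_zero {F : Subfield K} {N : Matrix m m K}
    (hN : ∀ i j, N i j ∈ F) (hdet : N.det ≠ 0) (k : m) {α : K} {b : m → K} (hb : ∀ p, b p ∈ F)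
    (hα : α ∉ F ∨ α ≠ 0 ∧ b = 0) : (N.updateRow k (α • N k + b)).det ≠ 0 := by
  have expand : (N.updateRow k (α • N k + b)).det = α * N.det + (N.updateRow k b).det := by
    rw [Matrix.det_updateRow_add, Matrix.det_updateRow_smul, Matrix.updateRow_eq_self]
  rw [expand]
  rcases hα with hα | ⟨hα, rfl⟩
  · intro hzero
    have hmem : (N.updateRow k b).det ∈ F := det_mem_subfield fun i j => by
      rw [Matrix.updateRow_apply]
      split_ifs
      exacts [hb j, hN i j]
    have hα_eq : α = -(N.updateRow k b).det / N.det := by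
      rw [eq_div_iff hdet]
      exact eq_neg_of_add_eq_zero_left hzero
    exact hα (hα_eq ▸ div_mem (neg_mem hmem) (det_mem_subfield hN))
  · have hrow : (N.updateRow k 0).det = 0 :=
      Matrix.det_eq_zero_of_row_eq_zero k fun j => by rw [Matrix.updateRow_self, Pi.zero_apply]
    rw [hrow, add_zero]
    exact mul_ne_zero hα hdet

variable [LinearOrder n]

theorem det_diagonal_mul_add_ne_zero {F : n → Subfield K} (hF : Monotone F) {s : m → n}
    (hs : Function.Injective s) {A B : Matrix m m K} {α : m → K}
    (hA : ∀ i k p, A k p ∈ F (s i)) (hdet : A.det ≠ 0) (hB : ∀ k p, B k p ∈ F (s k))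
    (hα_mem : ∀ j k, s j < s k → α j ∈ F (s k))
    (hα : ∀ k, α k ∉ F (s k) ∨ α k ≠ 0 ∧ B k = 0) :
    (Matrix.diagonal α * A + B).det ≠ 0 := by
  set M := Matrix.diagonal α * A + B with hM
  have hM_row (k : m) : M.row k = α k • A.row k + B.row k := by
    ext p
    simp [hM, Matrix.diagonal_mul]
  suffices hybrid : ∀ S : Finset m, (Matrix.of (S.piecewise M.row A.row)).det ≠ 0 by
    have huniv := hybrid Finset.univ
    rwa [Finset.piecewise_univ] at huniv
  intro S
  induction S using Finset.induction_on_max_value s with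
  | empty => rwa [Finset.piecewise_empty]
  | insert k S hk hmax ih =>
    have hmem (j p : m) : S.piecewise M.row A.row j p ∈ F (s k) := by
      by_cases hj : j ∈ S
      · have hlt : s j < s k := (hmax j hj).lt_of_ne fun h => hk (hs h ▸ hj)
        rw [Finset.piecewise_eq_of_mem _ _ _ hj, hM_row]
        exact add_mem (mul_mem (hα_mem j k hlt) (hA _ j p)) (hF hlt.le (hB j p))
      · rw [Finset.piecewise_eq_of_notMem _ _ _ hj]
        exact hA _ j p
    have hstep := det_updateRow_smul_add_ne_zero (N := Matrix.of (S.piecewise M.row A.row)) hmem ih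
      k (hB k) (hα k)
    have hrow : Matrix.of (S.piecewise M.row A.row) k = A.row k :=
      Finset.piecewise_eq_of_notMem _ _ _ hk
    rw [Finset.piecewise_insert, hM_row]
    rwa [hrow] at hstep

end Determinant

section Elimination

open Matrix Submodule

variable {K n κ ι : Type*} [Field K] [LinearOrder n] [Fintype κ] [Fintype ι]
  {F : n → Subfield K} {A : Matrix n κ K} {W : Matrix n ι K} {α : n → K} {d : κ → K} {d' : ι → K}

theorem exists_add_dotProduct_eq_zero_of_mem_span (hF : Monotone F)
    (hA : ∀ i j p, A j p ∈ F i) (hW : ∀ i c, W i c ∈ F i)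
    (hα_mem : ∀ i j, i < j → α i ∈ F j)
    (heq : ∀ i, (α i • A i) ⬝ᵥ d + W i ⬝ᵥ d' = 0) {i : n}
    (hi : W i ∈ span K (W '' Set.Iio i)) :
    ∃ b : κ → K, (∀ p, b p ∈ F i) ∧ ((∀ t < i, W t = 0) → b = 0) ∧
      (α i • A i + b) ⬝ᵥ d = 0 := by
  by_cases hzero : ∀ t < i, W t = 0
  · have hWi : W i = 0 := by
      have hbot : span K (W '' Set.Iio i) = ⊥ := by
        rw [span_eq_bot]
        rintro _ ⟨t, ht, rfl⟩
        exact hzero t ht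
      simpa [hbot] using hi
    exact ⟨0, fun _ => zero_mem _, fun _ => rfl, by simpa [hWi] using heq i⟩
  have hWi_span : W i ∈ span (F i) (W '' Set.Iio i) := by
    refine mem_span_subfield_of_mem_span ?_ (hW i) hi
    rintro _ ⟨t, ht, rfl⟩ c
    exact hF (le_of_lt ht) (hW t c)
  have hearlier : W '' Set.Iio i ⊆
      (span (F i) (Set.range d)).comap ((dotProductBilin (F i) K).flip d') := by
    rintro _ ⟨t, ht, rfl⟩
    have hrow : W t ⬝ᵥ d' =
        ∑ p, (-⟨α t * A t p, mul_mem (hα_mem t i ht) (hA i t p)⟩ : F i) • d p := by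
      simpa [dotProduct, Subfield.smul_def] using eq_neg_of_add_eq_zero_right (heq t)
    exact mem_span_range_iff_exists_fun _ |>.2 ⟨_, hrow.symm⟩
  have hWi_dot : W i ⬝ᵥ d' ∈ span (F i) (Set.range d) := span_le.2 hearlier hWi_span
  obtain ⟨b, hb⟩ := mem_span_range_iff_exists_fun _ |>.1 hWi_dot
  refine ⟨fun p => b p, fun p => (b p).2, fun h => absurd h hzero, ?_⟩
  rw [add_dotProduct, ← heq i, ← hb]
  rfl

theorem eq_zero_of_forall_smul_dotProduct_add_dotProduct_eq_zero [Fintype n]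
    [DecidableEq κ] (hF : Monotone F) (hA : ∀ i j p, A j p ∈ F i)
    (hA_det : ∀ σ : κ → n, Function.Injective σ → (A.submatrix σ id).det ≠ 0)
    (hW : ∀ i c, W i c ∈ F i) (hα_mem : ∀ i j, i < j → α i ∈ F j)
    (hα : ∀ i, α i ∉ F i ∨ α i ≠ 0 ∧ ∀ t < i, W t = 0)
    (hcard : Fintype.card κ + Fintype.card ι ≤ Fintype.card n)
    (heq : ∀ i, (α i • A i) ⬝ᵥ d + W i ⬝ᵥ d' = 0) : d = 0 := by
  classical
  let S : Finset n := {i | W i ∈ span K (W '' Set.Iio i)}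
  have hS : Fintype.card κ ≤ S.card := by
    have hindep := card_filter_notMem_span_image_Iio_le (K := K) W
    have hsplit := Finset.card_filter_add_card_filter_not (s := Finset.univ)
      fun i => W i ∈ span K (W '' Set.Iio i)
    rw [Module.finrank_fintype_fun_eq_card] at hindep
    rw [Finset.card_univ] at hsplit
    lia
  obtain ⟨σ, hσ⟩ := Function.Embedding.exists_of_card_le_finset hS
  have hσ_span (k : κ) : W (σ k) ∈ span K (W '' Set.Iio (σ k)) :=
    (Finset.mem_filter.1 (hσ ⟨k, rfl⟩)).2
  choose b hb_mem hb_zero hb_eq using fun k =>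
    exists_add_dotProduct_eq_zero_of_mem_span hF hA hW hα_mem heq (hσ_span k)
  have hdet : (diagonal (α ∘ σ) * A.submatrix σ id + Matrix.of b).det ≠ 0 :=
    det_diagonal_mul_add_ne_zero hF σ.injective (fun i k => hA (σ i) (σ k))
      (hA_det σ σ.injective) hb_mem (fun j k => hα_mem (σ j) (σ k))
      fun k => (hα (σ k)).imp_right fun h => ⟨h.1, hb_zero k h.2⟩
  refine eq_zero_of_mulVec_eq_zero hdet (funext fun k => ?_)
  rw [Pi.zero_apply, ← hb_eq k]
  simp [mulVec, dotProduct, diagonal_mul]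

end Elimination

theorem AllSquareSubmatricesNonsingular.det_submatrix_ne_zero {K : Type} [Field K] {r a : ℕ}
    {M : Matrix (Fin r) (Fin a) K} (hM : AllSquareSubmatricesNonsingular M) {m : Type*}
    [Fintype m] [DecidableEq m] {ρ : m → Fin r} {σ : m → Fin a} (hρ : Function.Injective ρ)
    (hσ : Function.Injective σ) : (M.submatrix ρ σ).det ≠ 0 := by
  let e := (Fintype.equivFin m).symm
  rw [← Matrix.det_submatrix_equiv_self e]
  exact hM _ (ρ ∘ e) (σ ∘ e) (hρ.comp e.injective) (hσ.comp e.injective)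

section StarCode

open Matrix

variable {K : Type} [Field K] {r a : ℕ}

/-- The coordinate `a r + i` of the `i`-th parity symbol, i.e. the `i`-th column of the block `-I_a`
of `starH`. -/
def parityIndex (a r : ℕ) : Fin a ↪ Fin (a * (r + 1)) :=
  (Fin.natAddEmb (a * r)).trans (finCongr (Nat.mul_succ a r).symm).toEmbedding

@[simp]
theorem val_parityIndex (i : Fin a) : (parityIndex a r i : ℕ) = a * r + i := rfl

theorem starH_apply_of_lt (Γ : Matrix (Fin r) (Fin a) K) (i : Fin a) {c : Fin (a * (r + 1))}
    (hc : (c : ℕ) < r) : starH Γ i c = Γ ⟨c, hc⟩ i := by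
  have hca : (c : ℕ) < a * r := hc.trans_le (Nat.le_mul_of_pos_left r i.pos)
  simp [starH, hca, Nat.div_eq_of_lt hc, Nat.mod_eq_of_lt hc]

theorem starH_apply_eq_zero_of_val_eq_zero (Γ : Matrix (Fin r) (Fin a) K) {i : Fin a}
    (hi : (i : ℕ) = 0) {c : Fin (a * (r + 1))} (hrc : r ≤ c) (hca : (c : ℕ) < a * r) :
    starH Γ i c = 0 := by
  have hr : 0 < r := Nat.pos_of_mul_pos_left (Nat.zero_lt_of_lt hca)
  have hdiv : 0 < (c : ℕ) / r := Nat.div_pos hrc hr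
  simp [starH, hca, hi, hdiv.ne']

theorem starH_apply_eq_zero_of_ne_parityIndex (Γ : Matrix (Fin r) (Fin a) K) {i : Fin a}
    {c : Fin (a * (r + 1))} (hca : a * r ≤ c) (hc : c ≠ parityIndex a r i) : starH Γ i c = 0 := by
  have hne : (c : ℕ) - a * r ≠ i := fun h => hc (Fin.ext (by rw [val_parityIndex]; lia))
  simp [starH, hca.not_gt, hne]

theorem starH_apply_mem {F : ℕ → Subfield K} (hF : Monotone F) {Γ : Matrix (Fin r) (Fin a) K}
    (hΓ : ∀ p (j : Fin a), Γ p j ∈ F j) (i : Fin a) {c : Fin (a * (r + 1))} (hrc : r ≤ c) :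
    starH Γ i c ∈ F (i - 1) := by
  simp only [starH, Matrix.of_apply]
  split_ifs with hca hdiv
  · have hr : 0 < r := Nat.pos_of_mul_pos_left (Nat.zero_lt_of_lt hca)
    have hblock : 0 < (c : ℕ) / r := Nat.div_pos hrc hr
    exact hF (Nat.sub_le_sub_left hblock i) (hΓ _ ⟨i - c / r, by lia⟩)
  · exact zero_mem _
  · exact neg_mem (one_mem _)
  · exact zero_mem _

/-- The indices `c < r` of the nonzero entries of `d`: its support in block `0`. -/
abbrev headSupport [DecidableEq K] (d : Fin (a * (r + 1)) → K) : Finset (Fin (a * (r + 1))) :=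
  {c | d c ≠ 0 ∧ (c : ℕ) < r}

/-- The indices `r ≤ c < a r` of the nonzero entries of `d`: its support in the blocks
`1, …, a - 1`. -/
abbrev middleSupport [DecidableEq K] (d : Fin (a * (r + 1)) → K) : Finset (Fin (a * (r + 1))) :=
  {c | d c ≠ 0 ∧ r ≤ c ∧ (c : ℕ) < a * r}

theorem disjoint_headSupport_middleSupport [DecidableEq K] (d : Fin (a * (r + 1)) → K) :
    Disjoint (headSupport d) (middleSupport d) := by
  rw [Finset.disjoint_filter]
  lia

theorem card_headSupport_add_card_middleSupport_le [DecidableEq K] {d : Fin (a * (r + 1)) → K}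
    (hd : hammingNorm d ≤ a) :
    (headSupport d).card + (middleSupport d).card
      ≤ Fintype.card {i // d (parityIndex a r i) = 0} := by
  let nonzeroParity : Finset (Fin a) := {i | d (parityIndex a r i) ≠ 0}
  have hdisj :
      Disjoint (headSupport d ∪ middleSupport d) (nonzeroParity.map (parityIndex a r)) := by
    rw [Finset.disjoint_right]
    intro c hc
    obtain ⟨i, -, rfl⟩ := Finset.mem_map.1 hc
    have hra : r ≤ a * r := Nat.le_mul_of_pos_left r i.pos
    simp only [Finset.mem_union, Finset.mem_filter, val_parityIndex]
    lia
  have hsubset : headSupport d ∪ middleSupport d ∪ nonzeroParity.map (parityIndex a r) ⊆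
      ({c | d c ≠ 0} : Finset _) := by
    intro c
    simp only [nonzeroParity, Finset.mem_union, Finset.mem_map, Finset.mem_filter_univ]
    rintro ((h | h) | ⟨i, h, rfl⟩)
    exacts [h.1, h.1, h]
  have hcard :
      (headSupport d).card + (middleSupport d).card + nonzeroParity.card ≤ hammingNorm d := by
    rw [← Finset.card_union_of_disjoint (disjoint_headSupport_middleSupport d),
      ← Finset.card_map (parityIndex a r), ← Finset.card_union_of_disjoint hdisj]
    exact Finset.card_le_card hsubset
  have hcompl : Fintype.card {i // d (parityIndex a r i) = 0} + nonzeroParity.card = a := by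
    rw [Fintype.card_subtype, Finset.card_filter_add_card_filter_not, Finset.card_fin]
  lia

theorem sum_headSupport_add_sum_middleSupport [DecidableEq K] {Γ : Matrix (Fin r) (Fin a) K}
    {d : Fin (a * (r + 1)) → K} (hd : d ∈ starCode Γ) {i : Fin a}
    (hi : d (parityIndex a r i) = 0) :
    ∑ c ∈ headSupport d, starH Γ i c * d c + ∑ c ∈ middleSupport d, starH Γ i c * d c = 0 := by
  rw [← Finset.sum_union (disjoint_headSupport_middleSupport d)]
  trans ∑ c, starH Γ i c * d c
  · refine Finset.sum_subset (Finset.subset_univ _) fun c _ hc => ?_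
    by_cases hparity : c = parityIndex a r i
    · rw [hparity, hi, mul_zero]
    by_cases hca : a * r ≤ c
    · rw [starH_apply_eq_zero_of_ne_parityIndex Γ hca hparity, zero_mul]
    · have hdc : d c = 0 := by
        simp only [Finset.mem_union, Finset.mem_filter_univ] at hc
        by_contra hne
        lia
      rw [hdc, mul_zero]
  · exact congrFun hd i

theorem gammaMatrix_apply_mem {F : ℕ → Subfield K} (hF : Monotone F)
    {C : Matrix (Fin r) (Fin a) K} (hC : ∀ i j, C i j ∈ F 0) {α : Fin a → K}
    (hα : ∀ j : Fin a, α j ∈ F j) (p : Fin r) (j : Fin a) : gammaMatrix C α p j ∈ F j :=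
  mul_mem (hF (Nat.zero_le j) (hC p j)) (hα j)

theorem apply_eq_zero_of_mem_starCode_of_hammingNorm_le [DecidableEq K] {F : ℕ → Subfield K}
    (hF : Monotone F) {C : Matrix (Fin r) (Fin a) K} (hC : ∀ i j, C i j ∈ F 0)
    (hCns : AllSquareSubmatricesNonsingular C) {α : Fin a → K} (hα_mem : ∀ j : Fin a, α j ∈ F j)
    (hα_ne : ∀ j : Fin a, (j : ℕ) ≤ 1 → α j ≠ 0)
    (hα_notMem : ∀ j : Fin a, 2 ≤ (j : ℕ) → α j ∉ F (j - 1)) {d : Fin (a * (r + 1)) → K}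
    (hd : d ∈ starCode (gammaMatrix C α)) (hnorm : hammingNorm d ≤ a) {c : Fin (a * (r + 1))}
    (hc : (c : ℕ) < r) : d c = 0 := by
  by_contra hdc
  let n := {i // d (parityIndex a r i) = 0}
  let ρ (p : headSupport d) : Fin r := ⟨p, (Finset.mem_filter.1 p.2).2.2⟩
  let W : Matrix n (middleSupport d) K := (starH (gammaMatrix C α)).submatrix (↑) (↑)
  have hρ : Function.Injective ρ := fun p p' h => Subtype.ext (Fin.ext (Fin.mk.inj h))
  have hmid (c : middleSupport d) : r ≤ c.1 ∧ c.1 < a * r := (Finset.mem_filter.1 c.2).2.2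
  have hhead : (fun p : headSupport d => d p) = 0 := by
    refine eq_zero_of_forall_smul_dotProduct_add_dotProduct_eq_zero
      (F := fun i : n => F (i - 1)) (A := Cᵀ.submatrix (↑) ρ) (W := W) (α := fun i => α i)
      (d' := fun p => d p) ?monotone (fun _ _ _ => hF (Nat.zero_le _) (hC _ _)) ?nonsingular
      (fun i c => starH_apply_mem hF (gammaMatrix_apply_mem hF hC hα_mem) i (hmid c).1)
      (fun i j hij => hF (Nat.le_sub_one_of_lt hij) (hα_mem i)) ?multiplier ?card ?equations
    case monotone => exact fun i j hij => hF (Nat.sub_le_sub_right hij 1)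
    case nonsingular =>
      intro σ hσ
      rw [← det_transpose]
      exact hCns.det_submatrix_ne_zero hρ (Subtype.val_injective.comp hσ)
    case multiplier =>
      intro i
      by_cases hi : 2 ≤ (i : ℕ)
      · exact .inl (hα_notMem i hi)
      · refine .inr ⟨hα_ne i (by lia), fun t hti => funext fun c => ?_⟩
        have ht : (t : ℕ) < i := hti
        exact starH_apply_eq_zero_of_val_eq_zero _ (by lia) (hmid c).1 (hmid c).2
    case card =>
      simpa only [Fintype.card_coe] using card_headSupport_add_card_middleSupport_le hnorm
    case equations =>
      intro i
      refine Eq.trans ?_ (sum_headSupport_add_sum_middleSupport hd i.2)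
      rw [← Finset.sum_coe_sort (headSupport d), ← Finset.sum_coe_sort (middleSupport d)]
      refine congrArg (· + _) (Finset.sum_congr rfl fun p _ => ?_)
      rw [starH_apply_of_lt _ _ (ρ p).2]
      exact congrArg (· * d p) (mul_comm _ _)
  exact hdc (congrFun hhead ⟨c, by simp [hdc, hc]⟩)

theorem sub_mem_starCode {Γ : Matrix (Fin r) (Fin a) K} {x y : Fin (a * (r + 1)) → K}
    (hx : x ∈ starCode Γ) (hy : y ∈ starCode Γ) : x - y ∈ starCode Γ := by
  change starH Γ *ᵥ (x - y) = 0
  rw [mulVec_sub, hx, hy, sub_zero]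

theorem starCode_erasure_recovery_general {F : ℕ → Subfield K} (hF : Monotone F)
    {C : Matrix (Fin r) (Fin a) K} (hC : ∀ i j, C i j ∈ F 0)
    (hCns : AllSquareSubmatricesNonsingular C) {α : Fin a → K}
    (hα_low : ∀ j : Fin a, (j : ℕ) ≤ 1 → α j ∈ F j ∧ α j ≠ 0)
    (hα_high : ∀ j : Fin a, 2 ≤ (j : ℕ) → α j ∈ F j ∧ α j ∉ F (j - 1))
    {E : Finset (Fin (a * (r + 1)))} (hE : E.card ≤ a) {x y : Fin (a * (r + 1)) → K}
    (hx : x ∈ starCode (gammaMatrix C α)) (hy : y ∈ starCode (gammaMatrix C α))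
    (hxy : ∀ j ∉ E, x j = y j) {i : Fin (a * (r + 1))} (hi : (i : ℕ) < r) : x i = y i := by
  classical
  have hnorm : hammingNorm (x - y) ≤ a := by
    refine le_trans (Finset.card_le_card fun j hj => ?_) hE
    by_contra hjE
    exact (Finset.mem_filter.1 hj).2 (sub_eq_zero.2 (hxy j hjE))
  have hα_mem (j : Fin a) : α j ∈ F j := by
    rcases le_or_gt (j : ℕ) 1 with hj | hj
    exacts [(hα_low j hj).1, (hα_high j hj).1]
  exact sub_eq_zero.1 <| apply_eq_zero_of_mem_starCode_of_hammingNorm_le hF hC hCns hα_mem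
    (fun j hj => (hα_low j hj).2) (fun j hj => (hα_high j hj).2) (sub_mem_starCode hx hy) hnorm hi

end StarCode

/-- Erasure-recovery property of the scalar code `C*_{a,r}`: for any erasure set
`E` of size at most `a`, the code symbols with indices in `E ∩ {0,…,r-1}` are
uniquely determined by the unerased code symbols. -/
theorem starCode_erasure_recovery
    (K : Type) [Field K] [Fintype K] (q a r : ℕ)
    (hq : IsPrimePow q) (ha : 2 ≤ a) (hr : 1 ≤ r)
    (Fsub : ℕ → Subfield K) (hmono : Monotone Fsub)
    (hcard : ∀ j ≤ a - 1, Nat.card (Fsub j) = q ^ 2 ^ (j - 1))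
    (htop : Fsub (a - 1) = ⊤)
    (C : Matrix (Fin r) (Fin a) K) (hC : ∀ i j, C i j ∈ Fsub 0)
    (hCns : AllSquareSubmatricesNonsingular C)
    (α : Fin a → K)
    (hα01 : ∀ j : Fin a, (j : ℕ) ≤ 1 → α j = 1)
    (hαmem : ∀ j : Fin a, 2 ≤ (j : ℕ) → α j ∈ Fsub (j : ℕ) ∧ α j ∉ Fsub ((j : ℕ) - 1))
    :
    ∀ E : Finset (Fin (a * (r + 1))), E.card ≤ a →
      ∀ x y : Fin (a * (r + 1)) → K,
        x ∈ starCode (gammaMatrix C α) → y ∈ starCode (gammaMatrix C α) →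
        (∀ j, j ∉ E → x j = y j) →
        ∀ i ∈ E, (i : ℕ) < r → x i = y i := by
  exact fun E hE x y hx hy hxy i _ hi => starCode_erasure_recovery_general hmono hC hCns
    (fun j hj => hα01 j hj ▸ ⟨one_mem _, one_ne_zero⟩) hαmem hE hx hy hxy hi
end

section
/- For every integer h with 1 ≤ h ≤ a, the Construction-1 packet-level code C_{(a,a(r+1)−1,r)} is an (h, h(r+1)−1) streaming code; i.e., it recovers each message packet within delay h(r+1)−1 whenever at most h packets are erased in the corresponding sliding window. In particular the decoding delay of Construction 1 degrades gracefully with the number of erasures. -/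
/-- A packet-level code with a causal systematic encoder: the parity part of the
coded packet at time `t` is a fixed function of the message packets at times `≤ t`. -/
structure PacketCode (F : Type) (k n : ℕ) where
  parity : (ℤ → Fin k → F) → ℤ → Fin (n - k) → F
  causal : ∀ (m m' : ℤ → Fin k → F) (t : ℤ),
    (∀ t' ≤ t, m t' = m' t') → parity m t = parity m' t

/-- A valid message stream vanishes at negative times. -/
def IsMsgStream {F : Type} [Zero F] {k : ℕ} (m : ℤ → Fin k → F) : Prop :=
  ∀ t < 0, m t = 0

/-- `(a, τ)` streaming-code property. -/
def IsSC {F : Type} [Zero F] {k n : ℕ} (C : PacketCode F k n) (a τ : ℕ) : Prop :=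
  ∀ m m' : ℤ → Fin k → F, IsMsgStream m → IsMsgStream m' →
    ∀ t : ℤ, 0 ≤ t →
      ∀ E : Finset ℤ, (∀ x ∈ E, t ≤ x ∧ x ≤ t + τ) → t ∈ E → E.card ≤ a →
        (∀ t' < t, m t' = m' t') →
        (∀ t' : ℤ, t ≤ t' → t' ≤ t + τ → t' ∉ E →
          m t' = m' t' ∧ C.parity m t' = C.parity m' t') →
        m t = m' t

/-- `(a, τ, r)` locally recoverable streaming code. -/
def IsLRSC {F : Type} [Zero F] {k n : ℕ} (C : PacketCode F k n) (a τ r : ℕ) : Prop :=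
  IsSC C a τ ∧ IsSC C 1 r
/-- Construction 1: the packet-level code with `k = r`, `n = r+1` and parity
`p₀(t) = Σ_{j=0}^{a-1} \hat m(t - r - j(r+1)) · Γ_j`, where
`\hat m(s) = (m_0(s), m_1(s+1), …, m_{r-1}(s+r-1))`. -/
def construction1 {K : Type} [Field K] {r a : ℕ} (Γ : Matrix (Fin r) (Fin a) K) :
    PacketCode K r (r + 1) where
  parity := fun m t _ => ∑ j : Fin a, ∑ i : Fin r,
    Γ i j * m (t - (r : ℤ) - ((j : ℕ) : ℤ) * ((r : ℤ) + 1) + ((i : ℕ) : ℤ)) i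
  causal := by
    intro m m' t h
    funext s
    refine Finset.sum_congr rfl fun j _ => Finset.sum_congr rfl fun i _ => ?_
    have h1 : (0 : ℤ) ≤ ((j : ℕ) : ℤ) * ((r : ℤ) + 1) := by positivity
    have h2 : ((i : ℕ) : ℤ) < (r : ℤ) := by exact_mod_cast i.isLt
    rw [h (t - (r : ℤ) - ((j : ℕ) : ℤ) * ((r : ℤ) + 1) + ((i : ℕ) : ℤ)) (by linarith)]

/-!
Fix a coordinate `i₀` of the packet `m(t)`. The symbols met by a diagonal through it split into
blocks of `r` message symbols followed by one parity symbol, and the parities of these blocks are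
the block Toeplitz matrix built from `Γ` applied to the message symbols. Each symbol lies in a
different packet, so at most `h` of the `h (r + 1)` symbols in the window are erased; comparing two
streams, the difference has at least as many vanishing parities as nonzero message symbols. Cutting
at the first prefix of blocks where the two numbers agree gives a square submatrix of the Toeplitz
matrix in which the columns are dominated by the rows, and it remains to show that every such
submatrix is nonsingular.

This is done by peeling. In the last row `b`, only the entries of the leading block involve `α_b`,
and every other entry of the submatrix lies in the field below; since `α_b` is not in that field,
the row may be replaced by its coefficient of `α_b`, which is supported on the leading block. This
repeats until the domination becomes tight at some height, where the matrix is block triangular, or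
until only columns of the leading block remain, where it is a minor of `C` up to row scaling.
-/

open Finset

section TrivialKernel

variable {K ρ κ : Type*} [Field K]

/-- The submatrix of `M` with rows `R` and columns `S` has trivial kernel. Vectors are functions on
all columns, of which only the values on `S` matter, so that submatrices need no reindexing. -/
def TrivialKerOn (M : Matrix ρ κ K) (R : Finset ρ) (S : Finset κ) : Prop :=
  ∀ v : κ → K, (∀ x ∈ R, ∑ s ∈ S, M x s * v s = 0) → ∀ s ∈ S, v s = 0

theorem det_mem_of_forall_mem {A σ n : Type*} [CommRing A] [SetLike σ A] [SubringClass σ A]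
    [Fintype n] [DecidableEq n] (L : σ) (M : Matrix n n A) (hM : ∀ i j, M i j ∈ L) :
    M.det ∈ L := by
  rw [Matrix.det_apply']
  exact sum_mem fun σ _ => mul_mem (intCast_mem L _) (prod_mem fun i _ => hM _ _)

namespace TrivialKerOn

variable {M N : Matrix ρ κ K} {R R₁ R₂ : Finset ρ} {S S₁ S₂ : Finset κ}

theorem congr (hM : TrivialKerOn M R S) (hMN : ∀ x ∈ R, ∀ s ∈ S, N x s = M x s) :
    TrivialKerOn N R S := by
  intro v hv
  refine hM v fun x hx => ?_
  rw [← hv x hx]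
  exact sum_congr rfl fun s hs => by rw [hMN x hx s hs]

theorem union_of_lowerTriangular [DecidableEq ρ] [DecidableEq κ] (h₁ : TrivialKerOn M R₁ S₁)
    (h₂ : TrivialKerOn M R₂ S₂) (hS : Disjoint S₁ S₂) (hzero : ∀ x ∈ R₁, ∀ s ∈ S₂, M x s = 0) :
    TrivialKerOn M (R₁ ∪ R₂) (S₁ ∪ S₂) := by
  intro v hv
  simp only [sum_union hS] at hv
  have hv₁ : ∀ s ∈ S₁, v s = 0 := h₁ v fun x hx => by
    have hx₂ : ∑ s ∈ S₂, M x s * v s = 0 :=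
      sum_eq_zero fun s hs => by rw [hzero x hx s hs, zero_mul]
    simpa only [hx₂, add_zero] using hv x (mem_union_left _ hx)
  have hv₂ : ∀ s ∈ S₂, v s = 0 := h₂ v fun x hx => by
    have hx₁ : ∑ s ∈ S₁, M x s * v s = 0 :=
      sum_eq_zero fun s hs => by rw [hv₁ s hs, mul_zero]
    simpa only [hx₁, zero_add] using hv x (mem_union_right _ hx)
  exact fun s hs => (mem_union.1 hs).elim (hv₁ s) (hv₂ s)

theorem of_image_of_row_scaling {ρ' κ' : Type*} [DecidableEq ρ'] [DecidableEq κ']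
    {N : Matrix ρ' κ' K} {f : ρ → ρ'} {g : κ → κ'} {k : κ' → κ} {c : ρ → K}
    (hN : TrivialKerOn N (R.image f) (S.image g)) (hk : ∀ s ∈ S, k (g s) = s)
    (hc : ∀ x ∈ R, c x ≠ 0) (hMN : ∀ x ∈ R, ∀ s ∈ S, M x s = c x * N (f x) (g s)) :
    TrivialKerOn M R S := by
  intro v hv s hs
  have hg : Set.InjOn g S := fun s hs s' hs' h => by rw [← hk s hs, h, hk s' hs']
  suffices hvk : ∀ y ∈ S.image g, v (k y) = 0 by
    simpa only [hk s hs] using hvk (g s) (mem_image_of_mem g hs)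
  refine hN _ (forall_mem_image.2 fun x hx => (mul_eq_zero.1 ?_).resolve_left (hc x hx))
  rw [sum_image hg, mul_sum, ← hv x hx]
  exact sum_congr rfl fun s hs => by rw [hMN x hx s hs, hk s hs, mul_assoc]

end TrivialKerOn

theorem trivialKerOn_iff_det_ne_zero {n : Type*} [Fintype n] [DecidableEq n] (M : Matrix ρ κ K)
    {R : Finset ρ} {S : Finset κ} (e : n ≃ R) (f : n ≃ S) :
    TrivialKerOn M R S ↔ (M.submatrix (fun i => (e i : ρ)) (fun i => (f i : κ))).det ≠ 0 := by
  classical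
  have mulVec_apply (v : κ → K) (i : n) :
      (M.submatrix (fun i => (e i : ρ)) (fun i => (f i : κ))).mulVec (fun i => v (f i)) i =
        ∑ s ∈ S, M (e i) s * v s := by
    rw [← sum_coe_sort S, ← f.sum_comp]
    rfl
  constructor
  · intro hker hdet
    obtain ⟨w, hw, hMw⟩ := Matrix.exists_mulVec_eq_zero_iff.2 hdet
    let v : κ → K := fun s => if hs : s ∈ S then w (f.symm ⟨s, hs⟩) else 0
    have hvw : (fun i => v (f i)) = w := by simp [v]
    have hv : ∀ s ∈ S, v s = 0 := hker v fun x hx => by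
      have := congrFun hMw (e.symm ⟨x, hx⟩)
      rwa [← hvw, mulVec_apply, Equiv.apply_symm_apply] at this
    exact hw (hvw ▸ funext fun i => hv _ (f i).2)
  · intro hdet v hv s hs
    have hvf : (fun i => v (f i)) = 0 := Matrix.eq_zero_of_mulVec_eq_zero hdet <| funext fun i => by
      rw [mulVec_apply, hv _ (e i).2, Pi.zero_apply]
    simpa using congrFun hvf (f.symm ⟨s, hs⟩)

theorem det_ne_zero_of_row_eq_add_smul {n : Type*} [Fintype n] [DecidableEq n] {L : Subfield K}
    {α : K} (hα : α ∉ L) {M : Matrix n n K} (i : n) {u w : n → K} (hrow : M i = u + α • w)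
    (hM : ∀ i' ≠ i, ∀ j, M i' j ∈ L) (hu : ∀ j, u j ∈ L) (hw : ∀ j, w j ∈ L)
    (hdet : (M.updateRow i w).det ≠ 0) : M.det ≠ 0 := by
  have updateRow_det_mem {y : n → K} (hy : ∀ j, y j ∈ L) : (M.updateRow i y).det ∈ L := by
    refine det_mem_of_forall_mem L _ fun i' j => ?_
    obtain rfl | hi := eq_or_ne i' i
    · rw [Matrix.updateRow_self]; exact hy j
    · rw [Matrix.updateRow_ne hi]; exact hM i' hi j
  have hexpand : M.det = (M.updateRow i u).det + α * (M.updateRow i w).det := by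
    rw [← Matrix.det_updateRow_smul, ← Matrix.det_updateRow_add, ← hrow, Matrix.updateRow_eq_self]
  intro hzero
  have hα_eq : α = -(M.updateRow i u).det / (M.updateRow i w).det := by
    rw [eq_div_iff hdet]
    linear_combination hzero - hexpand
  exact hα (hα_eq ▸ div_mem (neg_mem (updateRow_det_mem hu)) (updateRow_det_mem hw))

theorem TrivialKerOn.of_updateRow [DecidableEq ρ] {L : Subfield K} {α : K} (hα : α ∉ L)
    {M : Matrix ρ κ K} {R : Finset ρ} {S : Finset κ} (hcard : #S = #R) {b : ρ} (hb : b ∈ R)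
    {u w : κ → K} (hrow : ∀ s ∈ S, M b s = u s + α * w s)
    (hM : ∀ x ∈ R, x ≠ b → ∀ s ∈ S, M x s ∈ L) (hu : ∀ s ∈ S, u s ∈ L) (hw : ∀ s ∈ S, w s ∈ L)
    (hker : TrivialKerOn (M.updateRow b w) R S) : TrivialKerOn M R S := by
  classical
  let e : S ≃ R := equivOfCardEq hcard
  rw [trivialKerOn_iff_det_ne_zero _ e (Equiv.refl S)] at hker ⊢
  refine det_ne_zero_of_row_eq_add_smul hα (e.symm ⟨b, hb⟩) (u := fun s => u s)
    (w := fun s => w s) ?_ ?_ (fun s => hu s s.2) (fun s => hw s s.2) ?_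
  · ext s
    simpa using hrow s s.2
  · intro i hi s
    refine hM _ (e i).2 (fun h => hi ?_) s s.2
    rw [Equiv.eq_symm_apply]
    exact Subtype.ext h
  · convert hker using 2
    ext i s
    simp [Matrix.updateRow_apply, Equiv.eq_symm_apply, Subtype.ext_iff]

end TrivialKernel

section Domination

variable {ι : Type*}

theorem card_filter_not_lt_lt_add_card_filter_lt {β : Type*} (X : Finset β) (f : β → ℕ) {k g : ℕ}
    (hkg : k ≤ g) :
    #{x ∈ {x ∈ X | ¬g < f x} | k < f x} + #{x ∈ X | g < f x} = #{x ∈ X | k < f x} := by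
  rw [← card_filter_add_card_filter_not (s := {x ∈ X | k < f x}) (fun x => g < f x), add_comm,
    filter_filter, filter_filter, filter_filter]
  congr 2 <;> exact filter_congr fun x _ => by omega

/-- A stage of the peeling of a square submatrix whose leading block is block `o`: `R` are the rows,
`B` those not yet peeled, and `S` the columns, each a pair of a block and a position in it. Rows in
`R \ B` only meet the leading block, hence `dominated` compares `S` with `B` alone, above `o`. -/
structure IsPeelingStage (a o : ℕ) (R B : Finset ℕ) (S : Finset (ℕ × ι)) : Prop where
  subset : B ⊆ R
  le_row : ∀ x ∈ R, o ≤ x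
  row_lt : ∀ x ∈ R, x < o + a
  le_col : ∀ s ∈ S, o ≤ s.1
  card_eq : #S = #R
  dominated : ∀ g ≥ o, #{s ∈ S | g < s.1} ≤ #{b ∈ B | g < b}

namespace IsPeelingStage

variable {a o g b : ℕ} {R B : Finset ℕ} {S : Finset (ℕ × ι)}

theorem lower_of_tight (h : IsPeelingStage a o R B S)
    (htight : #{s ∈ S | g < s.1} = #{b ∈ B | g < b}) :
    IsPeelingStage a o (R \ {b ∈ B | g < b}) {b ∈ B | ¬g < b} {s ∈ S | ¬g < s.1} where
  subset x hx := by
    rw [mem_filter] at hx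
    exact mem_sdiff.2 ⟨h.subset hx.1, fun hx' => hx.2 (mem_filter.1 hx').2⟩
  le_row x hx := h.le_row x (mem_sdiff.1 hx).1
  row_lt x hx := h.row_lt x (mem_sdiff.1 hx).1
  le_col s hs := h.le_col s (mem_filter.1 hs).1
  card_eq := by
    have hS := card_filter_add_card_filter_not (s := S) (fun s => g < s.1)
    have hR := card_sdiff_add_card_eq_card ((filter_subset (fun b => g < b) B).trans h.subset)
    have := h.card_eq
    omega
  dominated k hk := by
    obtain hgk | hkg := lt_or_ge g k
    · rw [filter_filter, filter_false_of_mem fun s _ => by omega, card_empty]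
      exact Nat.zero_le _
    · have hS := card_filter_not_lt_lt_add_card_filter_lt S Prod.fst hkg
      have hB := card_filter_not_lt_lt_add_card_filter_lt B id hkg
      have := h.dominated k hk
      simp only [id] at hB
      omega

theorem upper_of_tight (h : IsPeelingStage a o R B S) (hg : o ≤ g)
    (htight : #{s ∈ S | g < s.1} = #{b ∈ B | g < b}) :
    IsPeelingStage a (g + 1) {b ∈ B | g < b} {b ∈ B | g < b} {s ∈ S | g < s.1} where
  subset := Subset.rfl
  le_row x hx := (mem_filter.1 hx).2
  row_lt x hx := (h.row_lt x (h.subset (mem_filter.1 hx).1)).trans_le (by omega)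
  le_col s hs := (mem_filter.1 hs).2
  card_eq := htight
  dominated k hk := by
    rw [filter_filter, filter_filter, filter_congr (q := fun s => k < s.1) fun s _ => by omega,
      filter_congr (s := B) (q := fun b => k < b) fun b _ => by omega]
    exact h.dominated k (by omega)

theorem erase_of_not_tight (h : IsPeelingStage a o R B S)
    (hslack : ∀ g ≥ o, {s ∈ S | g < s.1}.Nonempty → #{s ∈ S | g < s.1} ≠ #{b ∈ B | g < b}) :
    IsPeelingStage a o R (B.erase b) S where
  subset := (erase_subset b B).trans h.subset
  le_row := h.le_row
  row_lt := h.row_lt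
  le_col := h.le_col
  card_eq := h.card_eq
  dominated g hg := by
    obtain hempty | hne := {s ∈ S | g < s.1}.eq_empty_or_nonempty
    · simp [hempty]
    · have hlt := lt_of_le_of_ne (h.dominated g hg) (hslack g hg hne)
      rw [filter_erase]
      exact (Nat.le_sub_one_of_lt hlt).trans pred_card_le_card_erase

theorem exists_max_row_of_not_tight (h : IsPeelingStage a o R B S) {s : ℕ × ι} (hs : s ∈ S)
    (hso : s.1 ≠ o)
    (hslack : ∀ g ≥ o, {s ∈ S | g < s.1}.Nonempty → #{s ∈ S | g < s.1} ≠ #{b ∈ B | g < b}) :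
    ∃ b ∈ B, o + 2 ≤ b ∧ ∀ x ∈ B, x ≤ b := by
  have hne : {s ∈ S | o < s.1}.Nonempty :=
    ⟨s, mem_filter.2 ⟨hs, lt_of_le_of_ne (h.le_col s hs) hso.symm⟩⟩
  have htwo : 1 < #{b ∈ B | o < b} :=
    (Nat.succ_le_of_lt hne.card_pos).trans_lt
      (lt_of_le_of_ne (h.dominated o le_rfl) (hslack o le_rfl hne))
  obtain ⟨x, hx, y, hy, hxy⟩ := one_lt_card.1 htwo
  rw [mem_filter] at hx hy
  refine ⟨B.max' ⟨x, hx.1⟩, max'_mem _ _, ?_, B.le_max'⟩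
  have := B.le_max' x hx.1
  have := B.le_max' y hy.1
  omega

end IsPeelingStage

end Domination

section BlockToeplitz

variable {K ι : Type*} [Field K]

/-- The block Toeplitz matrix whose row `b` carries column `b - c` of `Γ` in block `c ≤ b`: it maps
the message symbols of a diagonal to its parity symbols. -/
def blockToeplitz (Γ : Matrix ι ℕ K) : Matrix ℕ (ℕ × ι) K :=
  fun b s => if s.1 ≤ b then Γ s.2 (b - s.1) else 0

theorem blockToeplitz_eq_zero (Γ : Matrix ι ℕ K) {b : ℕ} {s : ℕ × ι} (h : b < s.1) :
    blockToeplitz Γ b s = 0 :=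
  if_neg h.not_ge

/-- The product of `C` with the diagonal matrix of `α`, for infinitely many columns. -/
def scaleColumns (C : Matrix ι ℕ K) (α : ℕ → K) : Matrix ι ℕ K :=
  fun i j => C i j * α j

/-- The block Toeplitz matrix of `scaleColumns C α` in which each row `x ∉ B` is peeled: it is
replaced by its coefficient of `α (x - o)`, which is supported on the leading block `o`. -/
def peeledToeplitz (C : Matrix ι ℕ K) (α : ℕ → K) (o : ℕ) (B : Finset ℕ) : Matrix ℕ (ℕ × ι) K :=
  fun x s => if x ∈ B then blockToeplitz (scaleColumns C α) x s
    else if s.1 = o then C s.2 (x - o) else 0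

theorem trivialKerOn_peeledToeplitz_of_split {C : Matrix ι ℕ K} {α : ℕ → K} {o g : ℕ}
    {R B : Finset ℕ} {S : Finset (ℕ × ι)} (hBR : B ⊆ R) (hog : o ≤ g)
    (hlower : TrivialKerOn (peeledToeplitz C α o {b ∈ B | ¬g < b}) (R \ {b ∈ B | g < b})
      {s ∈ S | ¬g < s.1})
    (hupper : TrivialKerOn (peeledToeplitz C α (g + 1) {b ∈ B | g < b}) {b ∈ B | g < b}
      {s ∈ S | g < s.1}) :
    TrivialKerOn (peeledToeplitz C α o B) R S := by
  classical
  have hnotlt {x : ℕ} (hx : x ∈ R \ {b ∈ B | g < b}) (hxB : x ∈ B) : ¬g < x := fun hgx =>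
    (mem_sdiff.1 hx).2 (mem_filter.2 ⟨hxB, hgx⟩)
  rw [← sdiff_union_of_subset ((filter_subset (fun b => g < b) B).trans hBR),
    ← filter_union_filter_not_eq (fun s => g < s.1) S, union_comm (filter _ S)]
  refine TrivialKerOn.union_of_lowerTriangular (hlower.congr fun x hx s _ => ?_)
    (hupper.congr fun x hx s _ => ?_) (disjoint_filter_filter_not S S _).symm fun x hx s hs => ?_
  · by_cases hxB : x ∈ B
    · simp [peeledToeplitz, hxB, hnotlt hx hxB]
    · simp [peeledToeplitz, hxB]
  · simp only [peeledToeplitz, hx, (mem_filter.1 hx).1, if_true]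
  · have hgs := (mem_filter.1 hs).2
    by_cases hxB : x ∈ B
    · have := hnotlt hx hxB
      simp only [peeledToeplitz, hxB, if_true]
      exact blockToeplitz_eq_zero _ (by omega)
    · simp only [peeledToeplitz, hxB, if_false]
      exact if_neg (by omega)

/-- The algebraic hypotheses of Construction 1 on the first `a` columns of `C` and the first `a`
scalars `α`, relative to a tower `F` of fields. -/
structure IsTowerScaling (F : ℕ → Subfield K) (a : ℕ) (C : Matrix ι ℕ K) (α : ℕ → K) : Prop where
  mono : Monotone F
  coeff_mem : ∀ i j, C i j ∈ F 0
  minor : ∀ R ⊆ range a, ∀ S : Finset ι, #S = #R → TrivialKerOn C.transpose R S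
  scalar_mem : ∀ j, α j ∈ F j
  scalar_ne_zero : ∀ j < a, α j ≠ 0
  scalar_notMem : ∀ j < a, 2 ≤ j → α j ∉ F (j - 1)

namespace IsTowerScaling

variable {F : ℕ → Subfield K} {a o b : ℕ} {C : Matrix ι ℕ K} {α : ℕ → K} {R B : Finset ℕ}
  {S : Finset (ℕ × ι)}

theorem coeff_mem_tower (hT : IsTowerScaling F a C α) (i : ι) (j n : ℕ) : C i j ∈ F n :=
  hT.mono n.zero_le (hT.coeff_mem i j)

theorem blockToeplitz_mem (hT : IsTowerScaling F a C α) {n : ℕ} {s : ℕ × ι} (h : b - s.1 ≤ n) :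
    blockToeplitz (scaleColumns C α) b s ∈ F n := by
  unfold blockToeplitz scaleColumns
  split_ifs
  · exact mul_mem (hT.coeff_mem_tower _ _ n) (hT.mono h (hT.scalar_mem _))
  · exact zero_mem _

theorem trivialKerOn_of_leading_block (hT : IsTowerScaling F a C α)
    (h : IsPeelingStage a o R B S) (hS : ∀ s ∈ S, s.1 = o) :
    TrivialKerOn (peeledToeplitz C α o B) R S := by
  classical
  have hsnd : Set.InjOn Prod.snd (S : Set (ℕ × ι)) := fun s hs s' hs' hss' =>
    Prod.ext ((hS s hs).trans (hS s' hs').symm) hss'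
  have hsub : Set.InjOn (· - o) (R : Set ℕ) := fun x hx x' hx' hxx' =>
    (tsub_left_inj (h.le_row x hx) (h.le_row x' hx')).1 hxx'
  have hminor : TrivialKerOn C.transpose (R.image (· - o)) (S.image Prod.snd) := by
    refine hT.minor _ (image_subset_iff.2 fun x hx => mem_range.2 ?_) _ ?_
    · have := h.le_row x hx
      have := h.row_lt x hx
      omega
    · rw [card_image_of_injOn hsnd, card_image_of_injOn hsub, h.card_eq]
  refine hminor.of_image_of_row_scaling (k := fun i => (o, i))
    (c := fun x => if x ∈ B then α (x - o) else 1)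
    (fun s hs => Prod.ext (hS s hs).symm rfl) (fun x hx => ?_) (fun x hx s hs => ?_)
  · split_ifs
    · refine hT.scalar_ne_zero _ ?_
      have := h.le_row x hx
      have := h.row_lt x hx
      omega
    · exact one_ne_zero
  · have := h.le_row x hx
    by_cases hxB : x ∈ B <;>
      simp [peeledToeplitz, blockToeplitz, scaleColumns, hxB, hS s hs, this, mul_comm]

theorem trivialKerOn_of_erase (hT : IsTowerScaling F a C α) (h : IsPeelingStage a o R B S)
    (hb : b ∈ B) (hb_two : o + 2 ≤ b) (hb_max : ∀ x ∈ B, x ≤ b)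
    (hker : TrivialKerOn (peeledToeplitz C α o (B.erase b)) R S) :
    TrivialKerOn (peeledToeplitz C α o B) R S := by
  have hbR := h.subset hb
  have hα : α (b - o) ∉ F (b - o - 1) :=
    hT.scalar_notMem _ (by have := h.row_lt b hbR; omega) (by omega)
  have hrow (s : ℕ × ι) : peeledToeplitz C α o B b s =
      (if s.1 = o then 0 else blockToeplitz (scaleColumns C α) b s) +
        α (b - o) * (if s.1 = o then C s.2 (b - o) else 0) := by
    have : o ≤ b := by omega
    by_cases hs : s.1 = o <;>
      simp [peeledToeplitz, blockToeplitz, scaleColumns, hb, hs, this, mul_comm]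
  refine TrivialKerOn.of_updateRow hα h.card_eq hbR (fun s _ => hrow s) ?_ ?_ ?_
    (hker.congr fun x _ s _ => ?_)
  · intro x _ hxb s hs
    unfold peeledToeplitz
    split_ifs with hxB
    · have := hb_max x hxB
      have := h.le_col s hs
      exact hT.blockToeplitz_mem (by omega)
    · exact hT.coeff_mem_tower _ _ _
    · exact zero_mem _
  · intro s hs
    have := h.le_col s hs
    split_ifs
    · exact zero_mem _
    · exact hT.blockToeplitz_mem (by omega)
  · intro s _
    split_ifs
    · exact hT.coeff_mem_tower _ _ _
    · exact zero_mem _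
  · obtain rfl | hxb := eq_or_ne x b <;> simp [peeledToeplitz, *]

theorem trivialKerOn_peeledToeplitz (hT : IsTowerScaling F a C α) (h : IsPeelingStage a o R B S) :
    TrivialKerOn (peeledToeplitz C α o B) R S := by
  induction hN : ∑ s ∈ S, (s.1 + 1 - o) + #B using Nat.strong_induction_on
    generalizing o R B S with
  | _ N ih =>
  subst hN
  by_cases hlead : ∀ s ∈ S, s.1 = o
  · exact hT.trivialKerOn_of_leading_block h hlead
  by_cases htight : ∃ g ≥ o, {s ∈ S | g < s.1}.Nonempty ∧ #{s ∈ S | g < s.1} = #{b ∈ B | g < b}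
  · obtain ⟨g, hg, hne, heq⟩ := htight
    have hsum := sum_filter_add_sum_filter_not S (fun s => g < s.1) (fun s => s.1 + 1 - o)
    have hdecr : ∑ s ∈ S with g < s.1, (s.1 + 1 - (g + 1)) < ∑ s ∈ S with g < s.1, (s.1 + 1 - o) :=
      sum_lt_sum_of_nonempty hne fun s hs => by have := (mem_filter.1 hs).2; omega
    refine trivialKerOn_peeledToeplitz_of_split h.subset hg (ih _ ?_ (h.lower_of_tight heq) rfl)
      (ih _ ?_ (h.upper_of_tight hg heq) rfl)
    · have := card_filter_le B (fun b => ¬g < b)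
      omega
    · have := card_filter_le B (fun b => g < b)
      omega
  · push Not at hlead htight
    obtain ⟨s, hs, hso⟩ := hlead
    obtain ⟨b, hb, hb_two, hb_max⟩ := h.exists_max_row_of_not_tight hs hso htight
    refine hT.trivialKerOn_of_erase h hb hb_two hb_max (ih _ ?_ (h.erase_of_not_tight htight) rfl)
    exact Nat.add_lt_add_left (card_erase_lt_of_mem hb) _

end IsTowerScaling

theorem exists_first_balanced_prefix {σ β : ℕ → ℕ} (hσ : Monotone σ) (hσ_one : 0 < σ 1)
    (hβ_zero : β 0 = 0) (hβ_succ : ∀ k, β (k + 1) ≤ β k + 1) {h : ℕ} (hh : 0 < h)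
    (hle : σ h ≤ β h) : ∃ g, 0 < g ∧ g ≤ h ∧ σ g = β g ∧ ∀ k ≤ g, β k ≤ σ k := by
  classical
  have hex : ∃ g, 0 < g ∧ σ g ≤ β g := ⟨h, hh, hle⟩
  obtain ⟨hg_pos, hg_le⟩ := Nat.find_spec hex
  have hbefore : ∀ k < Nat.find hex, 0 < k → β k < σ k := fun k hk hk_pos =>
    not_le.1 fun hk_le => Nat.find_min hex hk ⟨hk_pos, hk_le⟩
  have hbalanced : σ (Nat.find hex) = β (Nat.find hex) := by
    obtain ⟨k, hk⟩ := Nat.exists_eq_add_one.2 hg_pos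
    rw [hk] at hg_le hbefore ⊢
    have hβ_step := hβ_succ k
    have hσ_step : σ k ≤ σ (k + 1) := hσ k.le_succ
    obtain rfl | hk_pos := k.eq_zero_or_pos
    · rw [zero_add] at *
      omega
    · have := hbefore k k.lt_succ_self hk_pos
      omega
  refine ⟨Nat.find hex, hg_pos, Nat.find_min' hex ⟨hh, hle⟩, hbalanced, fun k hk => ?_⟩
  obtain rfl | hk_pos := k.eq_zero_or_pos
  · rw [hβ_zero]; exact Nat.zero_le _
  obtain rfl | hk_lt := hk.eq_or_lt
  · exact hbalanced.ge
  · exact (hbefore k hk_lt hk_pos).le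

theorem card_filter_lt_lt_add_card_filter_lt_succ {β : Type*} (X : Finset β) (f : β → ℕ) {k g : ℕ}
    (hkg : k + 1 ≤ g) :
    #{x ∈ {x ∈ X | f x < g} | k < f x} + #{x ∈ X | f x < k + 1} = #{x ∈ X | f x < g} := by
  rw [← card_filter_add_card_filter_not (s := {x ∈ X | f x < g}) (fun x => k < f x),
    filter_filter (fun x => f x < g) (fun x => ¬k < f x)]
  congr 2
  exact filter_congr fun x _ => by omega

theorem isPeelingStage_of_balanced_prefix {S : Finset (ℕ × ι)} {B : Finset ℕ} {a g : ℕ}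
    (hga : g ≤ a) (hbalanced : #{s ∈ S | s.1 < g} = #{b ∈ B | b < g})
    (hprefix : ∀ k ≤ g, #{b ∈ B | b < k} ≤ #{s ∈ S | s.1 < k}) :
    IsPeelingStage a 0 {b ∈ B | b < g} {b ∈ B | b < g} {s ∈ S | s.1 < g} where
  subset := Subset.rfl
  le_row x _ := x.zero_le
  row_lt x hx := by have := (mem_filter.1 hx).2; omega
  le_col s _ := s.1.zero_le
  card_eq := hbalanced
  dominated k _ := by
    obtain hgk | hkg := le_or_gt g (k + 1)
    · rw [filter_filter, filter_false_of_mem fun s _ => by omega, card_empty]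
      exact Nat.zero_le _
    · have hS := card_filter_lt_lt_add_card_filter_lt_succ S Prod.fst hkg.le
      have hB := card_filter_lt_lt_add_card_filter_lt_succ B id hkg.le
      have := hprefix (k + 1) hkg.le
      simp only [id] at hB
      omega

theorem card_filter_lt_succ_le (B : Finset ℕ) (k : ℕ) :
    #{b ∈ B | b < k + 1} ≤ #{b ∈ B | b < k} + 1 := by
  refine (card_le_card fun b hb => ?_).trans (card_insert_le k _)
  grind

theorem exists_isPeelingStage_of_card_le {S : Finset (ℕ × ι)} {B : Finset ℕ} {a h : ℕ} {i : ι}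
    (hh : 0 < h) (hha : h ≤ a) (hS : ∀ s ∈ S, s.1 < h) (hB : ∀ b ∈ B, b < h) (hi : (0, i) ∈ S)
    (hcard : #S ≤ #B) :
    ∃ g > 0, IsPeelingStage a 0 {b ∈ B | b < g} {b ∈ B | b < g} {s ∈ S | s.1 < g} := by
  obtain ⟨g, hg, hgh, hbalanced, hprefix⟩ := exists_first_balanced_prefix
    (σ := fun k => #{s ∈ S | s.1 < k}) (β := fun k => #{b ∈ B | b < k})
    (fun k l hkl => card_le_card (monotone_filter_right S fun s _ hs => hs.trans_le hkl))
    (card_pos.2 ⟨_, mem_filter.2 ⟨hi, Nat.one_pos⟩⟩) (by simp) (card_filter_lt_succ_le B) hh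
    (by rwa [filter_true_of_mem hS, filter_true_of_mem hB])
  exact ⟨g, hg, isPeelingStage_of_balanced_prefix (hgh.trans hha) hbalanced hprefix⟩

theorem IsTowerScaling.leading_block_eq_zero [DecidableEq K] [Fintype ι] {F : ℕ → Subfield K}
    {a h : ℕ} {C : Matrix ι ℕ K} {α : ℕ → K} (hT : IsTowerScaling F a C α) (hh : 0 < h)
    (hha : h ≤ a) (u : ℕ × ι → K)
    (hcard : #{s ∈ range h ×ˢ (univ : Finset ι) | u s ≠ 0} ≤
      #{b ∈ range h | ∑ s ∈ range h ×ˢ univ, blockToeplitz (scaleColumns C α) b s * u s = 0})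
    (i : ι) : u (0, i) = 0 := by
  by_contra hui
  have hi : (0, i) ∈ {s ∈ range h ×ˢ (univ : Finset ι) | u s ≠ 0} := by simp [hh, hui]
  obtain ⟨g, hg, hstage⟩ := exists_isPeelingStage_of_card_le hh hha
    (fun s hs => mem_range.1 (mem_product.1 (mem_filter.1 hs).1).1)
    (fun b hb => mem_range.1 (mem_filter.1 hb).1) hi hcard
  refine hui (hT.trivialKerOn_peeledToeplitz hstage u (fun b hb => ?_) _ (mem_filter.2 ⟨hi, hg⟩))
  simp only [peeledToeplitz, hb, if_true]
  obtain ⟨hbB, hbg⟩ := mem_filter.1 hb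
  refine (sum_subset ((filter_subset _ _).trans (filter_subset _ _)) fun s hs hsS => ?_).trans
    (mem_filter.1 hbB).2
  by_cases hus : u s = 0
  · rw [hus, mul_zero]
  · have hgs : ¬s.1 < g := fun hsg => hsS (mem_filter.2 ⟨mem_filter.2 ⟨hs, hus⟩, hsg⟩)
    rw [blockToeplitz_eq_zero _ (by omega), zero_mul]

end BlockToeplitz

section Construction1

/-- `M` with infinitely many further columns, all zero. -/
noncomputable def extendColumns {K ι : Type*} [Zero K] {a : ℕ} (M : Matrix ι (Fin a) K) :
    Matrix ι ℕ K :=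
  fun i => Function.extend Fin.val (M i) 0

theorem extendColumns_val {K ι : Type*} [Zero K] {a : ℕ} (M : Matrix ι (Fin a) K) (i : ι)
    (j : Fin a) : extendColumns M i j = M i j :=
  Fin.val_injective.extend_apply _ _ _

theorem extend_val_eq_zero {K : Type*} [Zero K] {a : ℕ} (f : Fin a → K) {j : ℕ} (hj : a ≤ j) :
    Function.extend Fin.val f 0 j = 0 :=
  Function.extend_apply' _ _ _ fun ⟨k, hk⟩ => (hk ▸ k.2).not_ge hj

variable {K : Type} [Field K] {r a : ℕ}

theorem extendColumns_gammaMatrix (C : Matrix (Fin r) (Fin a) K) (α : Fin a → K) :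
    extendColumns (gammaMatrix C α) =
      scaleColumns (extendColumns C) (Function.extend Fin.val α 0) := by
  ext i j
  unfold scaleColumns
  obtain hj | hj := lt_or_ge j a
  · lift j to Fin a using hj
    rw [extendColumns_val, extendColumns_val, Fin.val_injective.extend_apply]
    rfl
  · rw [extend_val_eq_zero α hj, mul_zero]
    exact extend_val_eq_zero _ hj

theorem AllSquareSubmatricesNonsingular.trivialKerOn {C : Matrix (Fin r) (Fin a) K}
    (hC : AllSquareSubmatricesNonsingular C) {R : Finset ℕ} (hR : R ⊆ range a)
    {S : Finset (Fin r)} (hcard : #S = #R) :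
    TrivialKerOn (extendColumns C).transpose R S := by
  let e : Fin #S ≃ R := (finCongr hcard).trans R.equivFin.symm
  let f : Fin #S ≃ S := S.equivFin.symm
  let σ : Fin #S → Fin a := fun k => ⟨e k, mem_range.1 (hR (e k).2)⟩
  have hσ : Function.Injective σ := fun k l hkl =>
    e.injective (Subtype.ext (congrArg Fin.val hkl))
  rw [trivialKerOn_iff_det_ne_zero _ e f, ← Matrix.det_transpose]
  convert hC #S (fun k => f k) σ (Subtype.val_injective.comp f.injective) hσ using 2
  ext k l
  exact extendColumns_val C (f k) (σ l)

theorem isTowerScaling_extendColumns {F : ℕ → Subfield K} (hF : Monotone F)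
    {C : Matrix (Fin r) (Fin a) K} (hC : ∀ i j, C i j ∈ F 0)
    (hCns : AllSquareSubmatricesNonsingular C) {α : Fin a → K}
    (hα_le : ∀ j : Fin a, (j : ℕ) ≤ 1 → α j ∈ F j ∧ α j ≠ 0)
    (hα_ge : ∀ j : Fin a, 2 ≤ (j : ℕ) → α j ∈ F j ∧ α j ∉ F (j - 1)) :
    IsTowerScaling F a (extendColumns C) (Function.extend Fin.val α 0) where
  mono := hF
  coeff_mem i j := by
    obtain hj | hj := lt_or_ge j a
    · lift j to Fin a using hj
      exact (extendColumns_val C i j).symm ▸ hC i j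
    · rw [extendColumns, extend_val_eq_zero (C i) hj]
      exact zero_mem _
  minor _ hR _ hcard := hCns.trivialKerOn hR hcard
  scalar_mem j := by
    obtain hj | hj := lt_or_ge j a
    · lift j to Fin a using hj
      rw [Fin.val_injective.extend_apply]
      exact (le_or_gt (j : ℕ) 1).elim (fun hj => (hα_le j hj).1) (fun hj => (hα_ge j hj).1)
    · exact (extend_val_eq_zero α hj).symm ▸ zero_mem (F j)
  scalar_ne_zero j hj := by
    lift j to Fin a using hj
    rw [Fin.val_injective.extend_apply]
    obtain hj_le | hj_ge := le_or_gt (j : ℕ) 1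
    · exact (hα_le j hj_le).2
    · exact fun hα => (hα_ge j hj_ge).2 (hα ▸ zero_mem _)
  scalar_notMem j hj := by
    lift j to Fin a using hj
    rw [Fin.val_injective.extend_apply]
    exact fun hj_ge => (hα_ge j hj_ge).2

theorem construction1_parity_sub (Γ : Matrix (Fin r) (Fin a) K) (m m' : ℤ → Fin r → K) (t : ℤ) :
    (construction1 Γ).parity (m - m') t =
      (construction1 Γ).parity m t - (construction1 Γ).parity m' t := by
  ext
  simp only [construction1, Pi.sub_apply, mul_sub, sum_sub_distrib]

/-- The time of the symbol at position `i` of block `c` on the diagonal starting at time `t₀`;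
position `r` is that of the parity symbol. -/
def slotTime (r : ℕ) (t₀ : ℤ) (c i : ℕ) : ℤ :=
  t₀ + c * (r + 1) + i

theorem slotTime_inj {t₀ : ℤ} {c i c' i' : ℕ} (hi : i ≤ r) (hi' : i' ≤ r) :
    slotTime r t₀ c i = slotTime r t₀ c' i' ↔ c = c' ∧ i = i' := by
  refine ⟨fun h => ?_, fun ⟨hc, hi⟩ => hc ▸ hi ▸ rfl⟩
  have hnat : (r + 1) * c + i = (r + 1) * c' + i' := by
    unfold slotTime at h
    zify
    linarith
  have hdiv := congrArg (· / (r + 1)) hnat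
  have hmod := congrArg (· % (r + 1)) hnat
  simp only [Nat.mul_add_div r.succ_pos, Nat.mul_add_mod, Nat.div_eq_of_lt (Nat.lt_succ_of_le hi),
    Nat.div_eq_of_lt (Nat.lt_succ_of_le hi'), Nat.mod_eq_of_lt (Nat.lt_succ_of_le hi),
    Nat.mod_eq_of_lt (Nat.lt_succ_of_le hi')] at hdiv hmod
  exact ⟨by simpa using hdiv, hmod⟩

theorem slotTime_le {t₀ t : ℤ} (ht₀ : t₀ ≤ t) {c i h : ℕ} (hc : c < h) (hi : i ≤ r) :
    slotTime r t₀ c i ≤ t + (h * (r + 1) - 1 : ℕ) := by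
  have hslot : c * (r + 1) + i ≤ h * (r + 1) - 1 := by
    have := Nat.mul_le_mul_right (r + 1) (Nat.succ_le_of_lt hc)
    rw [Nat.succ_mul] at this
    omega
  have : (c : ℤ) * (r + 1) + i ≤ (h * (r + 1) - 1 : ℕ) := by exact_mod_cast hslot
  unfold slotTime
  linarith

/-- The message symbols on the diagonal of `d` starting at time `t₀`, by block and position: the
entry at `(c, i)` is `d̂(t₀ + c (r + 1))ᵢ`. -/
def diagonalSymbols (d : ℤ → Fin r → K) (t₀ : ℤ) : ℕ × Fin r → K :=
  fun s => d (slotTime r t₀ s.1 s.2) s.2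

theorem construction1_parity_slotTime (Γ : Matrix (Fin r) (Fin a) K) {d : ℤ → Fin r → K} {t t₀ : ℤ}
    (hd : ∀ t' < t, d t' = 0) (ht₀ : t₀ ≤ t) {b h : ℕ} (hb : b < h) (k : Fin (r + 1 - r)) :
    (construction1 Γ).parity d (slotTime r t₀ b r) k =
      ∑ s ∈ range h ×ˢ univ, blockToeplitz (extendColumns Γ) b s * diagonalSymbols d t₀ s := by
  let f : ℕ → K := fun j => ∑ i : Fin r,
    extendColumns Γ i j * d (t₀ + (b - j) * (r + 1) + (i : ℕ)) i
  have hparity : (construction1 Γ).parity d (slotTime r t₀ b r) k = ∑ j ∈ range a, f j := by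
    rw [← Fin.sum_univ_eq_sum_range f a]
    simp only [construction1, f]
    refine sum_congr rfl fun j _ => sum_congr rfl fun i _ => ?_
    rw [extendColumns_val]
    congr 2
    unfold slotTime
    ring
  have hf_ge (j : ℕ) (hj : a ≤ j) : f j = 0 := sum_eq_zero fun i _ => by
    rw [extendColumns, extend_val_eq_zero _ hj, zero_mul]
  have hf_gt (j : ℕ) (hj : b < j) : f j = 0 := sum_eq_zero fun i _ => by
    rw [hd _ (by nlinarith [i.2]), Pi.zero_apply, mul_zero]
  have hblock (c : ℕ) : ∑ i, blockToeplitz (extendColumns Γ) b (c, i) * diagonalSymbols d t₀ (c, i)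
      = if c ≤ b then f (b - c) else 0 := by
    split_ifs with hcb
    · simp [f, blockToeplitz, diagonalSymbols, slotTime, hcb]
    · simp [blockToeplitz, hcb]
  rw [hparity, sum_product]
  calc ∑ j ∈ range a, f j
      = ∑ j ∈ range (b + 1), f j := sum_congr_of_eq_on_inter
        (fun j _ hj => hf_gt j (by simpa using hj)) (fun j _ hj => hf_ge j (by simpa using hj))
        (fun _ _ _ => rfl)
    _ = ∑ c ∈ range (b + 1), f (b - c) := (sum_flip f).symm
    _ = ∑ c ∈ range h, if c ≤ b then f (b - c) else 0 := by
      rw [← sum_filter]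
      congr 1
      grind
    _ = _ := (sum_congr rfl fun c _ => hblock c).symm

theorem card_add_card_le_of_slotTime_mem {t₀ : ℤ} {S : Finset (ℕ × Fin r)} {P : Finset ℕ}
    {E : Finset ℤ} (hS : ∀ s ∈ S, slotTime r t₀ s.1 s.2 ∈ E)
    (hP : ∀ b ∈ P, slotTime r t₀ b r ∈ E) : #S + #P ≤ #E := by
  let time : (ℕ × Fin r) ⊕ ℕ → ℤ :=
    Sum.elim (fun s => slotTime r t₀ s.1 s.2) (fun b => slotTime r t₀ b r)
  have htime_inj : Function.Injective time := by
    refine Function.Injective.sumElim (fun s s' hss' => ?_) (fun b b' hbb' => ?_) fun s b hsb => ?_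
    · obtain ⟨hblock, hpos⟩ := (slotTime_inj s.2.2.le s'.2.2.le).1 hss'
      exact Prod.ext hblock (Fin.ext hpos)
    · exact ((slotTime_inj le_rfl le_rfl).1 hbb').1
    · exact s.2.2.ne ((slotTime_inj s.2.2.le le_rfl).1 hsb).2
  rw [← card_disjSum]
  refine card_le_card_of_injOn time (fun x hx => ?_) htime_inj.injOn
  obtain ⟨s, hs, rfl⟩ | ⟨b, hb, rfl⟩ := mem_disjSum.1 hx
  · exact hS s hs
  · exact hP b hb

theorem card_nonzero_symbols_le_card_zero_parities [DecidableEq K] {Γ : Matrix (Fin r) (Fin a) K}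
    {d : ℤ → Fin r → K} {t t₀ : ℤ} (ht₀ : t₀ ≤ t) (htr : t ≤ t₀ + r) {h : ℕ} {E : Finset ℤ}
    (hE : #E ≤ h) (hpast : ∀ t' < t, d t' = 0)
    (hwindow : ∀ t', t ≤ t' → t' ≤ t + (h * (r + 1) - 1 : ℕ) → t' ∉ E →
      d t' = 0 ∧ (construction1 Γ).parity d t' = 0) (k : Fin (r + 1 - r)) :
    #{s ∈ range h ×ˢ univ | diagonalSymbols d t₀ s ≠ 0} ≤
      #{b ∈ range h | (construction1 Γ).parity d (slotTime r t₀ b r) k = 0} := by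
  have hsymbols : ∀ s ∈ {s ∈ range h ×ˢ (univ : Finset (Fin r)) | diagonalSymbols d t₀ s ≠ 0},
      slotTime r t₀ s.1 s.2 ∈ E := fun s hs => by
    obtain ⟨hsh, hne⟩ := mem_filter.1 hs
    by_contra hnotin
    suffices hd : d (slotTime r t₀ s.1 s.2) = 0 from hne (congrFun hd s.2)
    obtain hlt | hge := lt_or_ge (slotTime r t₀ s.1 s.2) t
    · exact hpast _ hlt
    · exact (hwindow _ hge
        (slotTime_le ht₀ (mem_range.1 (mem_product.1 hsh).1) s.2.2.le) hnotin).1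
  have hparities : ∀ b ∈ {b ∈ range h | ¬(construction1 Γ).parity d (slotTime r t₀ b r) k = 0},
      slotTime r t₀ b r ∈ E := fun b hb => by
    obtain ⟨hbh, hne⟩ := mem_filter.1 hb
    by_contra hnotin
    have hge : t ≤ slotTime r t₀ b r := by
      have : (0 : ℤ) ≤ b * (r + 1) := by positivity
      unfold slotTime
      linarith
    exact hne (congrFun (hwindow _ hge (slotTime_le ht₀ (mem_range.1 hbh) le_rfl) hnotin).2 k)
  refine le_of_add_le_add_right
    ((card_add_card_le_of_slotTime_mem hsymbols hparities).trans (hE.trans_eq ?_))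
  rw [card_filter_add_card_filter_not, card_range]

theorem construction1_graceful_degradation_general {F : ℕ → Subfield K} (hF : Monotone F)
    {C : Matrix (Fin r) (Fin a) K} (hC : ∀ i j, C i j ∈ F 0)
    (hCns : AllSquareSubmatricesNonsingular C) {α : Fin a → K}
    (hα_le : ∀ j : Fin a, (j : ℕ) ≤ 1 → α j ∈ F j ∧ α j ≠ 0)
    (hα_ge : ∀ j : Fin a, 2 ≤ (j : ℕ) → α j ∈ F j ∧ α j ∉ F (j - 1))
    {h : ℕ} (hh : 1 ≤ h) (hha : h ≤ a) :
    IsSC (construction1 (gammaMatrix C α)) h (h * (r + 1) - 1) := by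
  classical
  intro m m' _ _ t _ E _ _ hE hpast hwindow
  funext i
  have ht₀ : t - (i : ℕ) ≤ t := by omega
  have hd_past : ∀ t' < t, (m - m') t' = 0 := fun t' ht' => sub_eq_zero.2 (hpast t' ht')
  have hcard := card_nonzero_symbols_le_card_zero_parities (Γ := gammaMatrix C α) ht₀ (by omega)
    hE hd_past (fun t' htt' ht' hnotin => ?_) ⟨0, by omega⟩
  · have hzero : diagonalSymbols (m - m') (t - (i : ℕ)) (0, i) = 0 := by
      refine (isTowerScaling_extendColumns hF hC hCns hα_le hα_ge).leading_block_eq_zero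
        hh hha _ (hcard.trans_eq (congrArg card (filter_congr fun b hb => ?_))) i
      rw [construction1_parity_slotTime _ hd_past ht₀ (mem_range.1 hb), extendColumns_gammaMatrix]
    simpa [diagonalSymbols, slotTime, sub_eq_zero] using hzero
  · obtain ⟨hm, hp⟩ := hwindow t' htt' ht' hnotin
    exact ⟨sub_eq_zero.2 hm, by rw [construction1_parity_sub, hp, sub_self]⟩

end Construction1

/-- Graceful degradation of Construction 1: for every `1 ≤ h ≤ a`, the code
`C_{(a,a(r+1)-1,r)}` is an `(h, h(r+1)-1)` streaming code, i.e. it recovers each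
message packet within delay `h(r+1)-1` whenever at most `h` packets are erased
in the corresponding sliding window. -/
theorem construction1_graceful_degradation
    (K : Type) [Field K] [Fintype K] (q a r : ℕ)
    (hq : IsPrimePow q) (ha : 2 ≤ a) (hr : 1 ≤ r)
    (Fsub : ℕ → Subfield K) (hmono : Monotone Fsub)
    (hcard : ∀ j ≤ a - 1, Nat.card (Fsub j) = q ^ 2 ^ (j - 1))
    (htop : Fsub (a - 1) = ⊤)
    (C : Matrix (Fin r) (Fin a) K) (hC : ∀ i j, C i j ∈ Fsub 0)
    (hCns : AllSquareSubmatricesNonsingular C)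
    (α : Fin a → K)
    (hα01 : ∀ j : Fin a, (j : ℕ) ≤ 1 → α j = 1)
    (hαmem : ∀ j : Fin a, 2 ≤ (j : ℕ) → α j ∈ Fsub (j : ℕ) ∧ α j ∉ Fsub ((j : ℕ) - 1))
    :
    ∀ h : ℕ, 1 ≤ h → h ≤ a →
      IsSC (construction1 (gammaMatrix C α)) h (h * (r + 1) - 1) := by
  exact fun _ => construction1_graceful_degradation_general hmono hC hCns
    (fun j hj => hα01 j hj ▸ ⟨one_mem _, one_ne_zero⟩) hαmem
end
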